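/- arXiv:2102.04239 — 2 statements merged into one kernel-verified Lean document; each statement's English description precedes it below -/
import Mathlib

section
/- Let X be a finite simple connected graph with a spanning tree T, and let f be an automorphism of X whose induced action on the first homology group H_1(X, ℤ) is the identity (equivalently, the matrix M_T(f) with respect to the basis of fundamental cycles of T is the identity). Then f fixes each fundamental oriented cycle C_i of T setwise. -/
/-!
The unit flow along a closed walk lies in the cycle space. If the walk repeats no edge, nothing
cancels, so the edges of the walk are exactly those on which the flow is nonzero. An automorphism
acting trivially on homology preserves this flow, hence its support, which determines the subgraph
traced by a nontrivial closed trail.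
-/

open SimpleGraph
variable {V : Type*}

variable {V : Type*}

/-- The cycle space (= first homology with coefficients in `R`) of a graph,
realized as antisymmetric flows supported on edges with zero divergence. -/
def cycleSpace (R : Type*) [CommRing R] [Fintype V] (G : SimpleGraph V) :
    Submodule R (V → V → R) where
  carrier := {f | (∀ u v, ¬ G.Adj u v → f u v = 0) ∧ (∀ u v, f u v = - f v u) ∧
    (∀ u, ∑ v, f u v = 0)}
  add_mem' := by
    rintro f g ⟨hf1, hf2, hf3⟩ ⟨hg1, hg2, hg3⟩
    refine ⟨fun u v h => by simp [hf1 u v h, hg1 u v h], fun u v => ?_, fun u => ?_⟩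
    · simp only [Pi.add_apply]; rw [hf2 u v, hg2 u v]; ring
    · simp [Finset.sum_add_distrib, hf3 u, hg3 u]
  zero_mem' := ⟨fun _ _ _ => rfl, fun _ _ => by simp, fun _ => by simp⟩
  smul_mem' := by
    rintro c f ⟨h1, h2, h3⟩
    refine ⟨fun u v h => by simp [h1 u v h], fun u v => by simp [h2 u v], fun u => ?_⟩
    simp only [Pi.smul_apply, smul_eq_mul]
    rw [← Finset.mul_sum, h3 u, mul_zero]

/-- An automorphism acts trivially (as the identity) on `H_1(X,R)`. -/
def FixesH1 (R : Type*) [CommRing R] [Fintype V] (G : SimpleGraph V) (f : G ≃g G) : Prop :=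
  ∀ c ∈ cycleSpace R G, ∀ u v : V, c (f u) (f v) = c u v

section Flow

variable (R : Type*) [CommRing R] [DecidableEq V] {G : SimpleGraph V}

/-- The flow of one unit along the dart `(a, b)`, encoded as an antisymmetric function. -/
def dartFlow (a b : V) : V → V → R :=
  Pi.single a (Pi.single b 1) - Pi.single b (Pi.single a 1)

/-- The flow of one unit along a walk, the sum of the flows along its darts. For a closed walk this
is the class of the walk in the first homology. -/
def walkFlow {a b : V} : G.Walk a b → V → V → R
  | .nil => 0
  | .cons (v := c) _ q => dartFlow R a c + walkFlow q

theorem dartFlow_antisymm (a b u v : V) : dartFlow R a b u v = -dartFlow R a b v u := by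
  simp only [dartFlow, Pi.sub_apply, Pi.single_apply, ite_apply, Pi.zero_apply, ← ite_and,
    and_comm, neg_sub]

theorem sum_dartFlow [Fintype V] (a b u : V) :
    ∑ v, dartFlow R a b u v = (Pi.single a 1 - Pi.single b 1 : V → R) u := by
  simp [dartFlow, Pi.single_apply, ite_apply, Finset.sum_sub_distrib]

theorem dartFlow_eq_zero_of_ne {a b u v : V} (h : s(u, v) ≠ s(a, b)) : dartFlow R a b u v = 0 := by
  simp only [ne_eq, Sym2.eq_iff, not_or] at h
  simp only [dartFlow, Pi.sub_apply, Pi.single_apply, ite_apply, Pi.zero_apply, ← ite_and, h.1,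
    h.2, if_false, sub_self]

theorem dartFlow_ne_zero_iff [Nontrivial R] {a b : V} (hab : a ≠ b) (u v : V) :
    dartFlow R a b u v ≠ 0 ↔ s(u, v) = s(a, b) := by
  refine ⟨not_imp_comm.1 (dartFlow_eq_zero_of_ne R), fun h => ?_⟩
  obtain ⟨rfl, rfl⟩ | ⟨rfl, rfl⟩ := Sym2.eq_iff.1 h <;> simp [dartFlow, hab, hab.symm]

theorem walkFlow_antisymm {a b : V} (w : G.Walk a b) (u v : V) :
    walkFlow R w u v = -walkFlow R w v u := by
  induction w with
  | nil => simp [walkFlow]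
  | cons _ q ih =>
    simp only [walkFlow, Pi.add_apply, neg_add, ← ih, ← dartFlow_antisymm]

theorem sum_walkFlow [Fintype V] {a b : V} (w : G.Walk a b) (u : V) :
    ∑ v, walkFlow R w u v = (Pi.single a 1 - Pi.single b 1 : V → R) u := by
  induction w with
  | nil => simp [walkFlow]
  | cons _ q ih =>
    simp only [walkFlow, Pi.add_apply, Finset.sum_add_distrib, sum_dartFlow, ih]
    rw [← Pi.add_apply, sub_add_sub_cancel]

theorem walkFlow_eq_zero_of_notMem_edges {a b : V} {w : G.Walk a b} {u v : V}
    (h : s(u, v) ∉ w.edges) : walkFlow R w u v = 0 := by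
  induction w with
  | nil => rfl
  | cons _ q ih =>
    rw [Walk.edges_cons, List.mem_cons, not_or] at h
    simp only [walkFlow, Pi.add_apply, dartFlow_eq_zero_of_ne R h.1, ih h.2, add_zero]

theorem walkFlow_mem_cycleSpace [Fintype V] {a : V} (w : G.Walk a a) :
    walkFlow R w ∈ cycleSpace R G :=
  ⟨fun _ _ huv => walkFlow_eq_zero_of_notMem_edges R fun h => huv (w.adj_of_mem_edges h),
    walkFlow_antisymm R w, fun u => (sum_walkFlow R w u).trans (by rw [sub_self, Pi.zero_apply])⟩

theorem walkFlow_ne_zero_iff_of_isTrail [Nontrivial R] {a b : V} {w : G.Walk a b}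
    (hw : w.IsTrail) (u v : V) : walkFlow R w u v ≠ 0 ↔ s(u, v) ∈ w.edges := by
  induction w with
  | nil => simp [walkFlow]
  | @cons a c _ hac q ih =>
    obtain ⟨hq, hac_notMem⟩ := (Walk.isTrail_cons hac q).1 hw
    simp only [walkFlow, Pi.add_apply, Walk.edges_cons, List.mem_cons]
    by_cases huv : s(u, v) = s(a, c)
    · have hq_zero : walkFlow R q u v = 0 := walkFlow_eq_zero_of_notMem_edges R (huv ▸ hac_notMem)
      simp only [hq_zero, add_zero, dartFlow_ne_zero_iff R hac.ne, huv, true_or]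
    · simp only [dartFlow_eq_zero_of_ne R huv, zero_add, ih hq, huv, false_or]

end Flow

section Subgraph

variable {W : Type*} {G : SimpleGraph V} {G' : SimpleGraph W}

theorem subgraph_map_iso_eq_of_adj_iff (f : G ≃g G') {H : G.Subgraph} {H' : G'.Subgraph}
    (hH : H.support = H.verts) (hH' : H'.support = H'.verts)
    (hadj : ∀ u v, H'.Adj (f u) (f v) ↔ H.Adj u v) : H.map f.toHom = H' := by
  refine Subgraph.ext (Set.ext (f.surjective.forall.2 fun u => ?_))
    (funext₂ (f.surjective.forall₂.2 fun u v => propext ?_))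
  · calc f u ∈ f '' H.verts
      _ ↔ ∃ v, H.Adj u v := by rw [f.injective.mem_set_image, ← hH, Subgraph.mem_support]
      _ ↔ ∃ v, H'.Adj (f u) (f v) := by simp only [hadj]
      _ ↔ f u ∈ H'.verts := by rw [← f.surjective.exists, ← Subgraph.mem_support, hH']
  · exact (Relation.map_apply_apply f.injective f.injective H.Adj u v).trans (hadj u v).symm

theorem support_toSubgraph_of_not_nil {a b : V} {w : G.Walk a b} (hw : ¬w.Nil) :
    w.toSubgraph.support = w.toSubgraph.verts :=
  w.toSubgraph.support_subset_verts.antisymm fun u hu => by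
    obtain ⟨e, he, v, rfl⟩ :=
      (Walk.mem_support_iff_exists_mem_edges_of_not_nil hw).1 (w.mem_verts_toSubgraph.1 hu)
    exact ⟨v, Walk.adj_toSubgraph_iff_mem_edges.2 he⟩

end Subgraph

theorem isCycle_cons_mapLe {G T : SimpleGraph V} (hTG : T ≤ G) {a b : V} (hab : G.Adj a b)
    (hnT : ¬T.Adj a b) {p : T.Walk b a} (hp : p.IsPath) :
    (Walk.cons hab (p.mapLe hTG)).IsCycle := by
  rw [Walk.cons_isCycle_iff, Walk.edges_mapLe_eq_edges]
  exact ⟨hp.mapLe hTG, fun h => hnT (p.adj_of_mem_edges h)⟩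

theorem kernel_fixes_fundamental_cycles_setwise_general [Fintype V] {R : Type*} [CommRing R]
    [Nontrivial R] {G : SimpleGraph V} {f : G ≃g G} (hf : FixesH1 R G f) {a : V}
    {w : G.Walk a a} (hw : w.IsCircuit) : w.toSubgraph.map f.toHom = w.toSubgraph := by
  classical
  have hsupp : w.toSubgraph.support = w.toSubgraph.verts :=
    support_toSubgraph_of_not_nil hw.not_nil
  refine subgraph_map_iso_eq_of_adj_iff f hsupp hsupp fun u v => ?_
  simp only [Walk.adj_toSubgraph_iff_mem_edges, ← walkFlow_ne_zero_iff_of_isTrail R hw.isTrail,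
    hf _ (walkFlow_mem_cycleSpace R w) u v]

theorem kernel_fixes_fundamental_cycles_setwise [Fintype V]
    (G : SimpleGraph V) (hG : G.Connected)
    (T : SimpleGraph V) (hTG : T ≤ G) (hT : T.IsTree)
    (f : G ≃g G) (hf : FixesH1 ℤ G f)
    -- a cotree dart `(a,b)` and the unique path in `T` from `b` to `a`
    {a b : V} (hab : G.Adj a b) (hnT : ¬ T.Adj a b)
    (p : T.Walk b a) (hp : p.IsPath) :
    -- `f` fixes the fundamental oriented cycle setwise
    ((Walk.cons hab (p.mapLe hTG)).toSubgraph).map f.toHom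
      = (Walk.cons hab (p.mapLe hTG)).toSubgraph :=
  kernel_fixes_fundamental_cycles_setwise_general hf (isCycle_cons_mapLe hTG hab hnT hp).isCircuit
end

section
/- A finite connected unicyclic graph X admits a nontrivial automorphism acting trivially on H_1(X,ℤ) if and only if X is periodic (admits a nontrivial automorphism rotating its unique cycle) or X contains a pendant tree with a nontrivial root-preserving automorphism. -/
open SimpleGraph
variable {V : Type*}

variable {V : Type*}

/-- A pendant tree of `G` rooted at `w`: `A` is the vertex set of a maximal acyclic
component of `G - w` hanging at `w`, so `{w} ∪ A` induces a tree. -/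
def IsPendantTree (G : SimpleGraph V) (w : V) (A : Set V) : Prop :=
  w ∉ A ∧ A.Nonempty ∧
  (∀ a ∈ A, ∀ b : V, G.Adj a b → b = w ∨ b ∈ A) ∧
  (G.induce (insert w A)).IsTree

/-- The pendant tree rooted at `w` has a nontrivial root-preserving automorphism. -/
def HasNontrivialRootAut (G : SimpleGraph V) (w : V) (A : Set V) : Prop :=
  ∃ φ : G.induce (insert w A) ≃g G.induce (insert w A),
    φ ⟨w, Set.mem_insert w A⟩ = ⟨w, Set.mem_insert w A⟩ ∧ ∃ x, φ x ≠ x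

/-- `G` is periodic: some nontrivial automorphism rotates the unique cycle. -/
def IsPeriodic [Fintype V] (G : SimpleGraph V) : Prop :=
  ∃ (n : ℕ) (_ : 2 < n) (c : ZMod n → V), Function.Injective c ∧
    (∀ i : ZMod n, G.Adj (c i) (c (i + 1))) ∧
    ∃ (f : G ≃g G) (d : ZMod n), d ≠ 0 ∧ (∀ i : ZMod n, f (c i) = c (i + d))

/-!
Every flow vanishes on bridges, since the net flow across a cut is zero. Deleting one edge of the
cycle leaves a spanning tree, which carries no nonzero flow, so `H_1` is spanned by the unit flow
around the cycle. Hence an automorphism acts trivially on `H_1` exactly when it rotates the cycle,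
possibly by zero. If the rotation is zero, then every vertex of the cycle is fixed, and so each
tree hanging off the cycle is mapped to itself; a nontrivial automorphism must move one of them.
Conversely, a root-preserving automorphism of a pendant tree extends by the identity, and it acts
trivially on `H_1` because flows vanish on pendant trees.
-/

section CycleSpace

variable {R : Type*} [CommRing R] {G : SimpleGraph V}

theorem sum_sum_eq_zero_of_antisymm {M : Type*} [AddCommGroup M] {g : V → V → M}
    (hg : ∀ x y, g x y = -g y x) (hdiag : ∀ x, g x x = 0) (S : Finset V) :
    ∑ x ∈ S, ∑ y ∈ S, g x y = 0 := by
  rw [← Finset.sum_product']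
  refine Finset.sum_involution (fun p _ => p.swap) ?_ ?_ ?_ ?_
  · rintro ⟨x, y⟩ -
    simp [hg x y]
  · rintro ⟨x, y⟩ - hne heq
    obtain rfl : y = x := congrArg Prod.fst heq
    exact hne (hdiag y)
  · rintro ⟨x, y⟩ hxy
    simpa [and_comm] using hxy
  · simp

/-- `S` contains `w`, and no edge leaves `S` except from `w`, so `S` hangs off the rest of `G` at
`w`; a pendant tree together with its root is a branch that induces a tree. -/
structure IsBranchAt (G : SimpleGraph V) (w : V) (S : Set V) : Prop where
  mem : w ∈ S
  mem_of_adj : ∀ ⦃x y⦄, x ∈ S → x ≠ w → G.Adj x y → y ∈ S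

variable [Fintype V] {g : V → V → R}

theorem sum_sum_compl_eq_zero [DecidableEq V] (hg : g ∈ cycleSpace R G) (S : Finset V) :
    ∑ x ∈ S, ∑ y ∈ Sᶜ, g x y = 0 := by
  obtain ⟨hsupp, hanti, hdiv⟩ := hg
  have hin : ∑ x ∈ S, ∑ y ∈ S, g x y = 0 :=
    sum_sum_eq_zero_of_antisymm hanti (fun x => hsupp x x G.irrefl) S
  have hall : ∑ x ∈ S, ∑ y, g x y = 0 := Finset.sum_eq_zero fun x _ => hdiv x
  simpa only [← Finset.sum_add_sum_compl S, Finset.sum_add_distrib, hin, zero_add] using hall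

theorem IsBranchAt.sum_compl_eq_zero [DecidableEq V] {w : V} {S : Finset V}
    (hS : IsBranchAt G w S) (hg : g ∈ cycleSpace R G) : ∑ y ∈ Sᶜ, g w y = 0 := by
  rw [← sum_sum_compl_eq_zero hg S]
  symm
  refine Finset.sum_eq_single_of_mem w hS.mem fun x hx hxw => ?_
  exact Finset.sum_eq_zero fun y hy => hg.1 x y fun hxy =>
    Finset.mem_compl.1 hy (hS.mem_of_adj hx hxw hxy)

theorem IsBranchAt.restrict_mem_cycleSpace {w : V} {S : Set V} [Fintype S]
    (hS : IsBranchAt G w S) (hg : g ∈ cycleSpace R G) :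
    (fun x y : S => g x y) ∈ cycleSpace R (G.induce S) := by
  classical
  refine ⟨fun x y hxy => hg.1 x y hxy, fun x y => hg.2.1 x y, fun x => ?_⟩
  have hout : ∑ y ∈ S.toFinsetᶜ, g x y = 0 := by
    by_cases hx : x.1 = w
    · rw [hx]
      exact IsBranchAt.sum_compl_eq_zero (by simpa using hS) hg
    · refine Finset.sum_eq_zero fun y hy => hg.1 x y fun hxy => ?_
      exact Finset.mem_compl.1 hy (Set.mem_toFinset.2 (hS.mem_of_adj x.2 hx hxy))
  calc ∑ y : S, g x y = ∑ y ∈ S.toFinset, g x y := Finset.sum_set_coe S (f := fun y => g x y)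
    _ = ∑ y, g x y := by rw [← Finset.sum_add_sum_compl S.toFinset, hout, add_zero]
    _ = 0 := hg.2.2 x

theorem apply_eq_zero_of_isBridge (hg : g ∈ cycleSpace R G) {u v : V}
    (huv : G.IsBridge s(u, v)) : g u v = 0 := by
  classical
  set S : Finset V := {x | (G.deleteEdges {s(u, v)}).Reachable u x} with hSdef
  have mem_S : ∀ x, x ∈ S ↔ (G.deleteEdges {s(u, v)}).Reachable u x := by simp [hSdef]
  have huS : u ∈ S := (mem_S u).2 .rfl
  have hvS : v ∉ S := (mem_S v).not.2 huv
  have hcross : ∀ x ∈ S, ∀ y ∉ S, G.Adj x y → x = u ∧ y = v := by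
    intro x hx y hy hxy
    have he : s(x, y) = s(u, v) := by
      by_contra he
      have hadj : (G.deleteEdges {s(u, v)}).Adj x y := deleteEdges_adj.2 ⟨hxy, he⟩
      exact hy ((mem_S y).2 (((mem_S x).1 hx).trans hadj.reachable))
    rcases Sym2.eq_iff.1 he with h | ⟨rfl, -⟩
    · exact h
    · exact absurd hx hvS
  have hbranch : IsBranchAt G u S :=
    ⟨huS, fun x y hx hxu hxy => by_contra fun hy => hxu (hcross x hx y hy hxy).1⟩
  rw [← hbranch.sum_compl_eq_zero hg]
  symm
  refine Finset.sum_eq_single_of_mem v (Finset.mem_compl.2 hvS) fun y hy hyv => ?_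
  exact hg.1 u y fun huy => hyv (hcross u huS y (Finset.mem_compl.1 hy) huy).2

theorem cycleSpace_eq_bot_of_isAcyclic (hG : G.IsAcyclic) : cycleSpace R G = ⊥ := by
  refine eq_bot_iff.2 fun g hg => ?_
  ext u v
  by_cases huv : G.Adj u v
  · exact apply_eq_zero_of_isBridge hg (isAcyclic_iff_forall_adj_isBridge.1 hG huv)
  · exact hg.1 u v huv

theorem mem_cycleSpace_deleteEdges (hg : g ∈ cycleSpace R G) {F : Set (Sym2 V)}
    (hF : ∀ u v, s(u, v) ∈ F → g u v = 0) : g ∈ cycleSpace R (G.deleteEdges F) := by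
  refine ⟨fun u v huv => ?_, hg.2⟩
  by_cases hadj : G.Adj u v
  · exact hF u v (by_contra fun hmem => huv (deleteEdges_adj.2 ⟨hadj, hmem⟩))
  · exact hg.1 u v hadj

end CycleSpace

section Branch

variable {G : SimpleGraph V} {w : V} {S A : Set V}

theorem IsPendantTree.isBranchAt (hA : IsPendantTree G w A) : IsBranchAt G w (insert w A) :=
  ⟨Set.mem_insert w A, fun x y hx hxw hxy => hA.2.2.1 x (hx.resolve_left hxw) y hxy⟩

theorem IsBranchAt.isPendantTree (hS : IsBranchAt G w S) (htree : (G.induce S).IsTree)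
    (hne : (S \ {w}).Nonempty) : IsPendantTree G w (S \ {w}) := by
  refine ⟨fun hw => hw.2 rfl, hne, fun a ha b hab => ?_, ?_⟩
  · exact or_iff_not_imp_left.2 fun hbw => ⟨hS.mem_of_adj ha.1 ha.2 hab, hbw⟩
  · rwa [Set.insert_sdiff_self_of_mem hS.mem]

theorem hasNontrivialRootAut_of_iso (f : G ≃g G) (hw : f w = w)
    (hA : ∀ x, f x ∈ insert w A ↔ x ∈ insert w A) {v : V} (hv : v ∈ A) (hfv : f v ≠ v) :
    HasNontrivialRootAut G w A :=
  ⟨⟨f.toEquiv.subtypeEquiv fun x => (hA x).symm, f.map_rel_iff⟩, Subtype.ext hw,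
    ⟨v, Set.mem_insert_of_mem w hv⟩, fun h => hfv (congrArg Subtype.val h)⟩

theorem IsBranchAt.exists_iso_extend (hS : IsBranchAt G w S) (φ : G.induce S ≃g G.induce S)
    (hφ : φ ⟨w, hS.mem⟩ = ⟨w, hS.mem⟩) :
    ∃ f : G ≃g G, (∀ x : S, f x = φ x) ∧ ∀ x ∉ S, f x = x := by
  classical
  let e : Equiv.Perm V := Equiv.Perm.ofSubtype (p := (· ∈ S)) φ.toEquiv
  have e_mem : ∀ x : S, e x = φ x := Equiv.Perm.ofSubtype_apply_coe φ.toEquiv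
  have e_notMem : ∀ x ∉ S, e x = x := fun x => Equiv.Perm.ofSubtype_apply_of_not_mem φ.toEquiv
  have hew : e w = w := (e_mem ⟨w, hS.mem⟩).trans (congrArg Subtype.val hφ)
  have adj_of_notMem : ∀ x y, y ∉ S → (G.Adj (e x) y ↔ G.Adj x y) := by
    intro x y hy
    by_cases hx : x ∈ S ∧ x ≠ w
    · have hex : e x ∈ S := (e_mem ⟨x, hx.1⟩).symm ▸ (φ ⟨x, hx.1⟩).2
      have hexw : e x ≠ w := fun h => hx.2 (e.injective (h.trans hew.symm))
      exact iff_of_false (fun h => hy (hS.mem_of_adj hex hexw h))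
        fun h => hy (hS.mem_of_adj hx.1 hx.2 h)
    · have hex : e x = x := by
        by_cases hxS : x ∈ S
        · rw [not_not.1 fun hxw => hx ⟨hxS, hxw⟩, hew]
        · exact e_notMem x hxS
      rw [hex]
  have e_adj : ∀ x y, G.Adj (e x) (e y) ↔ G.Adj x y := by
    intro x y
    by_cases hy : y ∈ S
    · by_cases hx : x ∈ S
      · rw [e_mem ⟨x, hx⟩, e_mem ⟨y, hy⟩]
        exact φ.map_rel_iff (a := ⟨x, hx⟩) (b := ⟨y, hy⟩)
      · rw [e_notMem x hx, adj_comm, adj_of_notMem y x hx, adj_comm]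
    · rw [e_notMem y hy, adj_of_notMem x y hy]
  exact ⟨⟨e, e_adj _ _⟩, e_mem, e_notMem⟩

theorem IsBranchAt.fixesH1_of_fixed {R : Type*} [CommRing R] [Fintype V] (hS : IsBranchAt G w S)
    (hacyc : (G.induce S).IsAcyclic) {f : G ≃g G} (hw : f w = w) (hf : ∀ x ∉ S, f x = x) :
    FixesH1 R G f := by
  intro g hg
  have : Fintype S := Fintype.ofFinite S
  have hzero : ∀ x y, x ∈ S → x ≠ w → g x y = 0 := by
    intro x y hx hxw
    by_cases hxy : G.Adj x y
    · have hrestrict := hS.restrict_mem_cycleSpace hg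
      rw [cycleSpace_eq_bot_of_isAcyclic hacyc, Submodule.mem_bot] at hrestrict
      exact congrFun₂ hrestrict ⟨x, hx⟩ ⟨y, hS.mem_of_adj hx hxw hxy⟩
    · exact hg.1 x y hxy
  have mem_of_ne : ∀ x, f x ≠ x → x ∈ S ∧ x ≠ w := fun x hx =>
    ⟨not_imp_comm.1 (hf x) hx, fun hxw => hx (hxw ▸ hw)⟩
  have hmoved : ∀ x y z, f x ≠ x → g (f x) y = g x z := by
    intro x y z hx
    obtain ⟨hxS, hxw⟩ := mem_of_ne x hx
    obtain ⟨hfxS, hfxw⟩ := mem_of_ne (f x) (f.injective.ne hx)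
    rw [hzero _ _ hfxS hfxw, hzero _ _ hxS hxw]
  intro u v
  by_cases hu : f u = u
  · by_cases hv : f v = v
    · rw [hu, hv]
    · rw [hg.2.1, hg.2.1 u, hmoved v _ u hv]
  · exact hmoved u _ v hu

end Branch

section DeleteEdges

variable {G H K : SimpleGraph V}

theorem eq_of_reachable_of_reachable_sdiff (hHG : H ≤ G) (hbridge : ∀ e ∈ H.edgeSet, G.IsBridge e)
    (hK : K ≤ G \ H) {x y : V} (hHxy : H.Reachable x y) (hKxy : K.Reachable x y) : x = y := by
  obtain ⟨p, hp⟩ := hHxy.exists_isPath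
  cases p with
  | nil => rfl
  | @cons _ z _ hxz q =>
    have hxq : x ∉ q.support := ((Walk.cons_isPath_iff hxz q).1 hp).2
    have hzy : (G.deleteEdges {s(x, z)}).Reachable z y :=
      ⟨(q.mapLe hHG).toDeleteEdge _ fun he =>
        hxq (by simpa using (q.mapLe hHG).fst_mem_support_of_mem_edges he)⟩
    have hKle : K ≤ G.deleteEdges {s(x, z)} := by
      intro a b hab
      refine deleteEdges_adj.2 ⟨(hK hab).1, fun he => (hK hab).2 ?_⟩
      rw [← mem_edgeSet, Set.mem_singleton_iff.1 he]
      exact hxz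
    exact absurd ((hKxy.mono hKle).trans hzy.symm) (hbridge s(x, z) hxz)

theorem exists_reachable_deleteEdges {F : Set (Sym2 V)} {S : Set V}
    (hFS : ∀ e ∈ F, ∀ x ∈ e, x ∈ S) {u w : V} (huw : G.Reachable u w) (hw : w ∈ S) :
    ∃ s ∈ S, (G.deleteEdges F).Reachable u s := by
  obtain ⟨p⟩ := huw
  induction p with
  | nil => exact ⟨_, hw, .rfl⟩
  | @cons x y _ hxy _ ih =>
    by_cases he : s(x, y) ∈ F
    · exact ⟨x, hFS _ he x (Sym2.mem_mk_left x y), .rfl⟩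
    · obtain ⟨s, hs, hys⟩ := ih hw
      have hadj : (G.deleteEdges F).Adj x y := deleteEdges_adj.2 ⟨hxy, he⟩
      exact ⟨s, hs, hadj.reachable.trans hys⟩

end DeleteEdges

section Cycle

/-- `c` lists the vertices of a cycle of `G` in cyclic order. This is the encoding of cycles used
in `IsPeriodic`, where a rotation becomes a translation of `ZMod n`. -/
structure IsIndexedCycle (G : SimpleGraph V) {n : ℕ} (c : ZMod n → V) : Prop where
  two_lt : 2 < n
  injective : Function.Injective c
  adj : ∀ i, G.Adj (c i) (c (i + 1))

/-- `(u, v)` is an edge of the closed walk `c`, traversed in the direction of `c`. -/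
def CycleStep {n : ℕ} (c : ZMod n → V) (u v : V) : Prop :=
  ∃ i, u = c i ∧ v = c (i + 1)

/-- The undirected edges of the closed walk `c`. -/
def cycleEdges {n : ℕ} (c : ZMod n → V) : Set (Sym2 V) :=
  Set.range fun i => s(c i, c (i + 1))

open Classical in
/-- The unit flow around the cycle `c`, which represents the homology class of `c`. It is written
without multiplicities, which is correct only when `c` is injective. -/
noncomputable def cycleFlow (R : Type*) [CommRing R] {n : ℕ} (c : ZMod n → V) (u v : V) : R :=
  (if CycleStep c u v then 1 else 0) - if CycleStep c v u then 1 else 0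

variable {G : SimpleGraph V} {n : ℕ} {c : ZMod n → V} {R : Type*} [CommRing R]

theorem zmod_induction [NeZero n] {P : ZMod n → Prop} (zero : P 0)
    (add_one : ∀ i, P i → P (i + 1)) (i : ZMod n) : P i := by
  rw [← ZMod.natCast_zmod_val i]
  induction i.val with
  | zero => simpa only [Nat.cast_zero] using zero
  | succ k ih => simpa only [Nat.cast_succ] using add_one k ih

theorem exists_isIndexedCycle_of_not_isAcyclic (hG : ¬G.IsAcyclic) :
    ∃ (n : ℕ) (c : ZMod n → V), IsIndexedCycle G c := by
  rw [isAcyclic_iff_free_cycleGraph] at hG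
  push Not at hG
  obtain ⟨n, hn, ⟨f⟩⟩ := hG
  obtain ⟨m, rfl⟩ := Nat.exists_eq_add_of_le' hn
  -- `ZMod (m + 3)` unfolds to `Fin (m + 3)`, the vertex type of the cycle graph.
  exact ⟨m + 3, f, hn, f.injective, fun i =>
    f.toHom.map_adj (cycleGraph_adj.2 (.inr (add_sub_cancel_left i 1)))⟩

theorem mk_mem_cycleEdges {u v : V} :
    s(u, v) ∈ cycleEdges c ↔ CycleStep c u v ∨ CycleStep c v u := by
  simp only [cycleEdges, CycleStep, Set.mem_range, Sym2.eq_iff, ← exists_or]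
  exact exists_congr fun i => by tauto

theorem mem_range_of_mem_cycleEdges {e : Sym2 V} (he : e ∈ cycleEdges c) {x : V} (hx : x ∈ e) :
    x ∈ Set.range c := by
  obtain ⟨i, rfl⟩ := he
  rcases Sym2.mem_iff.1 hx with rfl | rfl <;> exact Set.mem_range_self _

theorem cycleFlow_apply_of_notMem_cycleEdges {u v : V} (huv : s(u, v) ∉ cycleEdges c) :
    cycleFlow R c u v = 0 := by
  obtain ⟨huv, hvu⟩ := not_or.1 (mk_mem_cycleEdges.not.1 huv)
  rw [cycleFlow, if_neg huv, if_neg hvu, sub_zero]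

theorem cycleStep_of_cycleFlow_eq_one [NeZero (2 : R)] {u v : V} (h : cycleFlow R c u v = 1) :
    CycleStep c u v := by
  by_contra huv
  rw [cycleFlow, if_neg huv] at h
  split_ifs at h
  · exact two_ne_zero (α := R) (by linear_combination -h)
  · exact two_ne_zero (α := R) (by linear_combination -2 * h)

theorem cycleStep_map_iff {f : G ≃g G} {d : ZMod n} (hf : ∀ i, f (c i) = c (i + d)) (u v : V) :
    CycleStep c (f u) (f v) ↔ CycleStep c u v := by
  refine ((Equiv.addRight d).exists_congr fun i => ?_).symm
  rw [Equiv.coe_addRight, add_right_comm, ← hf, ← hf, f.injective.eq_iff, f.injective.eq_iff]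

theorem cycleFlow_map {f : G ≃g G} {d : ZMod n} (hf : ∀ i, f (c i) = c (i + d)) (u v : V) :
    cycleFlow R c (f u) (f v) = cycleFlow R c u v := by
  classical
  exact congrArg₂ (· - ·) (if_congr (cycleStep_map_iff hf u v) rfl rfl)
    (if_congr (cycleStep_map_iff hf v u) rfl rfl)

namespace IsIndexedCycle

variable (hc : IsIndexedCycle G c)
include hc

theorem neZero : NeZero n := ⟨by have := hc.two_lt; omega⟩

theorem cycleStep_apply_left {i : ZMod n} {v : V} : CycleStep c (c i) v ↔ v = c (i + 1) := by
  simp [CycleStep, hc.injective.eq_iff]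

theorem cycleStep_apply_right {u : V} {i : ZMod n} : CycleStep c u (c i) ↔ u = c (i - 1) := by
  simp [CycleStep, hc.injective.eq_iff, ← sub_eq_iff_eq_add]

theorem cycleStep_asymm {u v : V} (huv : CycleStep c u v) : ¬CycleStep c v u := by
  obtain ⟨i, rfl, rfl⟩ := huv
  rw [hc.cycleStep_apply_left, hc.injective.eq_iff]
  intro h
  have htwo : ((2 : ℕ) : ZMod n) = 0 := by push_cast; linear_combination -h
  exact absurd (Nat.le_of_dvd two_pos ((ZMod.natCast_eq_zero_iff 2 n).1 htwo)) hc.two_lt.not_ge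

theorem cycleFlow_apply_succ (i : ZMod n) : cycleFlow R c (c i) (c (i + 1)) = 1 := by
  have hstep : CycleStep c (c i) (c (i + 1)) := ⟨i, rfl, rfl⟩
  rw [cycleFlow, if_pos hstep, if_neg (hc.cycleStep_asymm hstep), sub_zero]

theorem cycleEdges_subset_edgeSet : cycleEdges c ⊆ G.edgeSet :=
  Set.range_subset_iff.2 hc.adj

theorem cycleFlow_mem_cycleSpace [Fintype V] : cycleFlow R c ∈ cycleSpace R G := by
  classical
  refine ⟨fun u v huv => cycleFlow_apply_of_notMem_cycleEdges fun he =>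
    huv (hc.cycleEdges_subset_edgeSet he), fun u v => (neg_sub _ _).symm, fun u => ?_⟩
  by_cases hu : u ∈ Set.range c
  · obtain ⟨i, rfl⟩ := hu
    simp [cycleFlow, hc.cycleStep_apply_left, hc.cycleStep_apply_right]
  · refine Finset.sum_eq_zero fun v _ => cycleFlow_apply_of_notMem_cycleEdges fun he => hu ?_
    exact mem_range_of_mem_cycleEdges he (Sym2.mem_mk_left u v)

theorem not_isBridge [Finite V] (i : ZMod n) : ¬G.IsBridge s(c i, c (i + 1)) := by
  have := Fintype.ofFinite V
  intro hbridge
  have hzero := apply_eq_zero_of_isBridge (hc.cycleFlow_mem_cycleSpace (R := ℤ)) hbridge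
  exact one_ne_zero ((hc.cycleFlow_apply_succ i).symm.trans hzero)

theorem exists_rotation_of_fixesH1 [Fintype V] [NeZero (2 : R)] {f : G ≃g G}
    (hf : FixesH1 R G f) : ∃ d, ∀ i, f (c i) = c (i + d) := by
  have := hc.neZero
  have hstep : ∀ i, CycleStep c (f (c i)) (f (c (i + 1))) := fun i =>
    cycleStep_of_cycleFlow_eq_one (R := R) <|
      (hf _ hc.cycleFlow_mem_cycleSpace _ _).trans (hc.cycleFlow_apply_succ i)
  obtain ⟨d, hd, -⟩ := hstep 0
  refine ⟨d, zmod_induction (by rw [hd, zero_add]) fun i hi => ?_⟩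
  have hnext := hstep i
  rw [hi, hc.cycleStep_apply_left] at hnext
  rw [hnext, add_right_comm]

end IsIndexedCycle

end Cycle

section Unicyclic

/-- A unicyclic graph, encoded as a connected graph with as many edges as vertices, which is
equivalent to having exactly one cycle. -/
structure IsUnicyclic [Fintype V] (G : SimpleGraph V) : Prop where
  connected : G.Connected
  ncard_edgeSet : G.edgeSet.ncard = Fintype.card V

/-- The component of `c k` after the edges of the cycle `c` are deleted: in a unicyclic graph this
is the tree, including its root, that is attached to the cycle at `c k`. -/
def cycleBranch (G : SimpleGraph V) {n : ℕ} (c : ZMod n → V) (k : ZMod n) : Set V :=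
  ((G.deleteEdges (cycleEdges c)).connectedComponentMk (c k)).supp

variable {G : SimpleGraph V} {n : ℕ} {c : ZMod n → V}

theorem mem_cycleBranch {k : ZMod n} {x : V} :
    x ∈ cycleBranch G c k ↔ (G.deleteEdges (cycleEdges c)).Reachable x (c k) :=
  ConnectedComponent.eq

theorem exists_mem_cycleBranch (hG : G.Connected) (c : ZMod n → V) (v : V) :
    ∃ k, v ∈ cycleBranch G c k := by
  obtain ⟨_, ⟨k, rfl⟩, hk⟩ := exists_reachable_deleteEdges
    (fun _ he _ hx => mem_range_of_mem_cycleEdges he hx)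
    (hG.preconnected v (c 0)) (Set.mem_range_self 0)
  exact ⟨k, mem_cycleBranch.2 hk⟩

theorem apply_mem_cycleBranch_iff {f : G ≃g G} (hf : ∀ i, f (c i) = c i) {k : ZMod n} (x : V) :
    f x ∈ cycleBranch G c k ↔ x ∈ cycleBranch G c k := by
  have hstep := cycleStep_map_iff (c := c) (f := f) (d := 0) (by simpa only [add_zero] using hf)
  let f' : G.deleteEdges (cycleEdges c) ≃g G.deleteEdges (cycleEdges c) :=
    ⟨f.toEquiv, fun {a b} => by
      simp only [deleteEdges_adj, mk_mem_cycleEdges]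
      exact and_congr f.map_adj_iff (not_congr (or_congr (hstep a b) (hstep b a)))⟩
  rw [mem_cycleBranch, mem_cycleBranch, ← f'.reachable_iff (u := x), show f' (c k) = c k from hf k]
  rfl

namespace IsUnicyclic

variable [Fintype V] (hG : IsUnicyclic G)
include hG

theorem not_isAcyclic : ¬G.IsAcyclic := by
  intro hacyc
  have hcard := (isTree_iff_connected_and_card.1 ⟨hG.connected, hacyc⟩).2
  rw [Nat.card_coe_set_eq, hG.ncard_edgeSet, Nat.card_eq_fintype_card] at hcard
  omega

theorem isTree_deleteEdges {e : Sym2 V} (he : e ∈ G.edgeSet) (hbridge : ¬G.IsBridge e) :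
    (G.deleteEdges {e}).IsTree := by
  induction e with
  | h u v =>
    refine isTree_iff_connected_and_card.2
      ⟨hG.connected.connected_delete_edge_of_not_isBridge hbridge, ?_⟩
    rw [edgeSet_deleteEdges, Nat.card_coe_set_eq, Set.ncard_sdiff_singleton_add_one he,
      hG.ncard_edgeSet, Nat.card_eq_fintype_card]

variable (hc : IsIndexedCycle G c)
include hc

-- Subtracting a multiple of the unit flow makes any flow vanish on a chosen edge of the cycle.
theorem cycleSpace_eq_span_cycleFlow {R : Type*} [CommRing R] :
    cycleSpace R G = Submodule.span R {cycleFlow R c} := by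
  refine le_antisymm (fun g hg => Submodule.mem_span_singleton.2 ?_)
    ((Submodule.span_singleton_le_iff_mem _ _).2 hc.cycleFlow_mem_cycleSpace)
  set a : R := g (c 0) (c (0 + 1)) with ha
  have hmem : g - a • cycleFlow R c ∈ cycleSpace R G :=
    sub_mem hg (Submodule.smul_mem _ a hc.cycleFlow_mem_cycleSpace)
  have hzero : (g - a • cycleFlow R c) (c 0) (c (0 + 1)) = 0 := by
    rw [Pi.sub_apply, Pi.sub_apply, Pi.smul_apply, Pi.smul_apply, hc.cycleFlow_apply_succ,
      smul_eq_mul, mul_one, ha, sub_self]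
  have htree := hG.isTree_deleteEdges (hc.adj 0) (hc.not_isBridge 0)
  have hrest : g - a • cycleFlow R c ∈ cycleSpace R (G.deleteEdges {s(c 0, c (0 + 1))}) := by
    refine mem_cycleSpace_deleteEdges hmem fun u v huv => ?_
    rcases Sym2.eq_iff.1 (Set.mem_singleton_iff.1 huv) with ⟨rfl, rfl⟩ | ⟨rfl, rfl⟩
    · exact hzero
    · rw [hmem.2.1, hzero, neg_zero]
  rw [cycleSpace_eq_bot_of_isAcyclic htree.isAcyclic, Submodule.mem_bot, sub_eq_zero] at hrest
  exact ⟨a, hrest.symm⟩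

theorem fixesH1_of_rotation {R : Type*} [CommRing R] {f : G ≃g G} {d : ZMod n}
    (hf : ∀ i, f (c i) = c (i + d)) : FixesH1 R G f := by
  intro g hg u v
  rw [hG.cycleSpace_eq_span_cycleFlow hc, Submodule.mem_span_singleton] at hg
  obtain ⟨a, rfl⟩ := hg
  simp only [Pi.smul_apply, cycleFlow_map hf]

theorem isBridge_of_mem_edgeSet_deleteEdges {e : Sym2 V}
    (he : e ∈ (G.deleteEdges (cycleEdges c)).edgeSet) : G.IsBridge e := by
  rw [edgeSet_deleteEdges] at he
  by_contra hbridge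
  have hc' : IsIndexedCycle (G.deleteEdges {e}) c :=
    ⟨hc.two_lt, hc.injective, fun i => deleteEdges_adj.2 ⟨hc.adj i, fun h => he.2 ⟨i, h⟩⟩⟩
  exact hc'.not_isBridge 0
    (isAcyclic_iff_forall_isBridge.1 (hG.isTree_deleteEdges he.1 hbridge).isAcyclic (hc'.adj 0))

theorem isAcyclic_deleteEdges_cycleEdges : (G.deleteEdges (cycleEdges c)).IsAcyclic :=
  isAcyclic_iff_forall_isBridge.2 fun _ he =>
    (hG.isBridge_of_mem_edgeSet_deleteEdges hc he).anti (deleteEdges_le _)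

theorem eq_of_mem_cycleBranch_of_mem_range {k : ZMod n} {x : V} (hx : x ∈ cycleBranch G c k)
    (hxc : x ∈ Set.range c) : x = c k := by
  have := hc.neZero
  obtain ⟨j, rfl⟩ := hxc
  have hle : fromEdgeSet (cycleEdges c) ≤ G \ G.deleteEdges (cycleEdges c) := by
    rintro u v ⟨huv, -⟩
    exact (sdiff_adj _ _ _ _).2
      ⟨hc.cycleEdges_subset_edgeSet huv, fun h => (deleteEdges_adj.1 h).2 huv⟩
  have hadj : ∀ i, (fromEdgeSet (cycleEdges c)).Adj (c i) (c (i + 1)) := fun i =>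
    (fromEdgeSet_adj _).2 ⟨⟨i, rfl⟩, (hc.adj i).ne⟩
  have hreach : ∀ i, (fromEdgeSet (cycleEdges c)).Reachable (c 0) (c i) :=
    zmod_induction .rfl fun i hi => hi.trans (hadj i).reachable
  exact eq_of_reachable_of_reachable_sdiff (deleteEdges_le _)
    (fun _ => hG.isBridge_of_mem_edgeSet_deleteEdges hc) hle (mem_cycleBranch.1 hx)
    ((hreach j).symm.trans (hreach k))

theorem isBranchAt_cycleBranch (k : ZMod n) : IsBranchAt G (c k) (cycleBranch G c k) := by
  refine ⟨mem_cycleBranch.2 .rfl, fun x y hx hxk hxy => ?_⟩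
  have hadj : (G.deleteEdges (cycleEdges c)).Adj x y := deleteEdges_adj.2 ⟨hxy, fun he =>
    hxk (hG.eq_of_mem_cycleBranch_of_mem_range hc hx
      (mem_range_of_mem_cycleEdges he (Sym2.mem_mk_left x y)))⟩
  exact mem_cycleBranch.2 (hadj.symm.reachable.trans (mem_cycleBranch.1 hx))

theorem isTree_induce_cycleBranch (k : ZMod n) : (G.induce (cycleBranch G c k)).IsTree := by
  have hinduce : G.induce (cycleBranch G c k) =
      (G.deleteEdges (cycleEdges c)).induce (cycleBranch G c k) := by
    ext ⟨x, hx⟩ ⟨y, hy⟩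
    refine ⟨fun hxy => deleteEdges_adj.2 ⟨hxy, fun he => G.ne_of_adj hxy ?_⟩, fun hxy => hxy.1⟩
    have eq_root : ∀ z ∈ s(x, y), z ∈ cycleBranch G c k → z = c k := fun z hz hzk =>
      hG.eq_of_mem_cycleBranch_of_mem_range hc hzk (mem_range_of_mem_cycleEdges he hz)
    exact (eq_root x (Sym2.mem_mk_left x y) hx).trans (eq_root y (Sym2.mem_mk_right x y) hy).symm
  rw [hinduce]
  exact (hG.isAcyclic_deleteEdges_cycleEdges hc).isTree_connectedComponent _

theorem exists_isPendantTree_of_fixes_cycle {f : G ≃g G} (hf : ∀ i, f (c i) = c i) {v : V}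
    (hv : f v ≠ v) : ∃ (w : V) (A : Set V), IsPendantTree G w A ∧ HasNontrivialRootAut G w A := by
  obtain ⟨k, hk⟩ := exists_mem_cycleBranch hG.connected c v
  have hbranch := hG.isBranchAt_cycleBranch hc k
  have hvA : v ∈ cycleBranch G c k \ {c k} := ⟨hk, fun h => hv (h ▸ hf k)⟩
  refine ⟨c k, cycleBranch G c k \ {c k},
    hbranch.isPendantTree (hG.isTree_induce_cycleBranch hc k) ⟨v, hvA⟩,
    hasNontrivialRootAut_of_iso f (hf k) (fun x => ?_) hvA hv⟩
  rw [Set.insert_sdiff_self_of_mem hbranch.mem]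
  exact apply_mem_cycleBranch_iff hf x

end IsUnicyclic

end Unicyclic

theorem unicyclic_kernel_iff_general (R : Type*) [CommRing R] [NeZero (2 : R)] [Fintype V]
    (G : SimpleGraph V) (hG : G.Connected) (huni : G.edgeSet.ncard = Fintype.card V) :
    (∃ f : G ≃g G, (∃ v : V, f v ≠ v) ∧ FixesH1 R G f) ↔
      IsPeriodic G ∨
      ∃ (w : V) (A : Set V), IsPendantTree G w A ∧ HasNontrivialRootAut G w A := by
  have hG : IsUnicyclic G := ⟨hG, huni⟩
  constructor
  · rintro ⟨f, ⟨v, hv⟩, hf⟩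
    obtain ⟨n, c, hc⟩ := exists_isIndexedCycle_of_not_isAcyclic hG.not_isAcyclic
    obtain ⟨d, hd⟩ := hc.exists_rotation_of_fixesH1 hf
    rcases ne_or_eq d 0 with hd0 | rfl
    · exact .inl ⟨n, hc.two_lt, c, hc.injective, hc.adj, f, d, hd0, hd⟩
    · exact .inr (hG.exists_isPendantTree_of_fixes_cycle hc (by simpa only [add_zero] using hd) hv)
  · rintro (⟨n, hn, c, hinj, hadj, f, d, hd0, hd⟩ | ⟨w, A, hA, φ, hφ, x, hx⟩)
    · have hmove : f (c 0) ≠ c 0 := by rwa [hd, zero_add, hinj.ne_iff]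
      exact ⟨f, ⟨c 0, hmove⟩, hG.fixesH1_of_rotation ⟨hn, hinj, hadj⟩ hd⟩
    · obtain ⟨f, hf, hfix⟩ := hA.isBranchAt.exists_iso_extend φ hφ
      have hw : f w = w := (hf ⟨w, Set.mem_insert w A⟩).trans (congrArg Subtype.val hφ)
      exact ⟨f, ⟨x, fun h => hx (Subtype.ext ((hf x).symm.trans h))⟩,
        hA.isBranchAt.fixesH1_of_fixed hA.2.2.2.isAcyclic hw hfix⟩

theorem unicyclic_kernel_iff [Fintype V] (G : SimpleGraph V)
    (hG : G.Connected) (huni : G.edgeSet.ncard = Fintype.card V) :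
    (∃ f : G ≃g G, (∃ v : V, f v ≠ v) ∧ FixesH1 ℤ G f) ↔
      IsPeriodic G ∨
      ∃ (w : V) (A : Set V), IsPendantTree G w A ∧ HasNontrivialRootAut G w A :=
  unicyclic_kernel_iff_general ℤ G hG huni
end
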